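/- Let $n, d, p, i$ be integers with $0 \le d < n$, $1 \le p \le n-d$ and $0 \le i \le d$. Then the map $\tau \mapsto \mathcal{F}_{\tau} := \{g_{n,d,i}(B) \mid B \in \tau^{-1}(+)\}$ is a bijection between $\bar{\mathcal{S}}_{p,i}(n,d)$ and the set of $(d,i)$-Ferrers diagrams with respect to $p$. -/

import Mathlib

/-! Common definitions: signotopes and co-signotopes on `[n] = {1, …, n}` (encoded as
`Finset.Icc 1 n` in `ℕ`), sign functions are `Finset ℕ → Bool` (`true` = `+`, `false` = `-`)
that vanish (are `-`) away from the relevant subsets. -/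

open Classical in
/-- The sign function with `+`-set `S` (and `-` elsewhere). -/
noncomputable def ofPlusSet (S : Set (Finset ℕ)) : Finset ℕ → Bool :=
  fun A => if A ∈ S then true else false

/-- Number of sign changes in a list of signs. -/
def signChanges (l : List Bool) : ℕ :=
  ((l.zip l.tail).filter fun p => p.1 ≠ p.2).length

/-- Number of `+`-subsets of a sign function. -/
noncomputable def plusCount (τ : Finset ℕ → Bool) : ℕ :=
  {A : Finset ℕ | τ A = true}.ncard

/-- The series of signs `τ (C ∪ {x})` for `x ∈ [n] \ C` in increasing order.
For a `d`-subset `B` with `i`-th smallest element `b`, `series n τ (B.erase b)` is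
the `(τ,B,i)`-series. -/
def series (n : ℕ) (τ : Finset ℕ → Bool) (C : Finset ℕ) : List Bool :=
  ((Finset.Icc 1 n \ C).sort (· ≤ ·)).map fun x => τ (insert x C)

/-- An `r`-signotope on `[n]`, encoded as a sign function on all of `Finset ℕ`
which is `-` away from the `r`-subsets of `[n]`. -/
def IsSignotope (n r : ℕ) (σ : Finset ℕ → Bool) : Prop :=
  (∀ A, σ A = true → A ⊆ Finset.Icc 1 n ∧ A.card = r) ∧
  ∀ X : Finset ℕ, X ⊆ Finset.Icc 1 n → X.card = r + 1 →
    signChanges ((X.sort (· ≤ ·)).map fun x => σ (X.erase x)) ≤ 1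

/-- A `d`-co-signotope on `[n]`: every `(τ,B,i)`-series has at most one sign change. -/
def IsCoSignotope (n d : ℕ) (τ : Finset ℕ → Bool) : Prop :=
  (∀ A, τ A = true → A ⊆ Finset.Icc 1 n ∧ A.card = d) ∧
  ∀ B : Finset ℕ, B ⊆ Finset.Icc 1 n → B.card = d → ∀ b ∈ B,
    signChanges (series n τ (B.erase b)) ≤ 1

/-- `𝒮_p(n,r)`: `r`-signotopes on `[n]` with exactly `p` `+`-signs. -/
noncomputable def sigSet (n r p : ℕ) : Set (Finset ℕ → Bool) :=
  {σ | IsSignotope n r σ ∧ plusCount σ = p}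

/-- `𝒮_{≤p}(n,r)`. -/
noncomputable def sigSetLe (n r p : ℕ) : Set (Finset ℕ → Bool) :=
  {σ | IsSignotope n r σ ∧ plusCount σ ≤ p}

/-- `𝒮̄_p(n,d)`: `d`-co-signotopes on `[n]` with exactly `p` `+`-subsets. -/
noncomputable def coSigSet (n d p : ℕ) : Set (Finset ℕ → Bool) :=
  {τ | IsCoSignotope n d τ ∧ plusCount τ = p}

/-- `𝒮̄_{≤p}(n,d)`. -/
noncomputable def coSigSetLe (n d p : ℕ) : Set (Finset ℕ → Bool) :=
  {τ | IsCoSignotope n d τ ∧ plusCount τ ≤ p}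

/-- `σ` and `τ` differ by a single step: `σ⁻¹(+) ⊊ τ⁻¹(+)` and `|τ⁻¹(+)| = |σ⁻¹(+)| + 1`. -/
noncomputable def SingleStep (σ τ : Finset ℕ → Bool) : Prop :=
  {A | σ A = true} ⊂ {A | τ A = true} ∧ plusCount τ = plusCount σ + 1

/-- The higher Bruhat order on `r`-signotopes on `[n]`: reflexive-transitive closure of
the single step relation. -/
noncomputable def BruhatLe (n r : ℕ) (σ τ : Finset ℕ → Bool) : Prop :=
  Relation.ReflTransGen (fun a b => IsSignotope n r a ∧ IsSignotope n r b ∧ SingleStep a b) σ τ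

/-- The complementary higher Bruhat order on `d`-co-signotopes on `[n]`. -/
noncomputable def CoBruhatLe (n d : ℕ) (σ τ : Finset ℕ → Bool) : Prop :=
  Relation.ReflTransGen (fun a b => IsCoSignotope n d a ∧ IsCoSignotope n d b ∧ SingleStep a b) σ τ

/-- Adjacency in the graph `G_{n,d}`: `B' = (B \ {x}) ∪ {y}` with no element of `B \ {x}`
strictly between `x` and `y`. -/
def GAdj (n d : ℕ) (B B' : Finset ℕ) : Prop :=
  B ⊆ Finset.Icc 1 n ∧ B.card = d ∧ B' ⊆ Finset.Icc 1 n ∧ B'.card = d ∧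
  ∃ x ∈ B, ∃ y ∈ Finset.Icc 1 n, y ∉ B ∧ B' = insert y (B.erase x) ∧
    ∀ z ∈ B.erase x, ¬(min x y < z ∧ z < max x y)

/-- The source subset `S_{n,d,i} = {1,…,i} ∪ {n-d+i+1,…,n}`. -/
def sourceSubset (n d i : ℕ) : Finset ℕ :=
  Finset.Icc 1 i ∪ Finset.Icc (n - d + i + 1) n

/-- Connectivity inside the `+`-subsets of `τ` (the induced subgraph `G_{n,d}[τ]`). -/
def plusConn (n d : ℕ) (τ : Finset ℕ → Bool) : Finset ℕ → Finset ℕ → Prop :=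
  Relation.ReflTransGen fun A A' => τ A = true ∧ τ A' = true ∧ GAdj n d A A'

/-- The vertex set `𝒞^τ_i` of the `+`-component of `τ` containing `S_{n,d,i}`
(empty if `S_{n,d,i}` is not a `+`-subset). -/
def comp (n d : ℕ) (τ : Finset ℕ → Bool) (i : ℕ) : Set (Finset ℕ) :=
  {B | τ (sourceSubset n d i) = true ∧ τ B = true ∧ plusConn n d τ (sourceSubset n d i) B}

/-- The `j`-th smallest element (1-based) of a finite set of naturals. -/
def nthElt (B : Finset ℕ) (j : ℕ) : ℕ := (B.sort (· ≤ ·)).getD (j - 1) 0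

/-- `b_j` with the conventions `b_0 = 0` and `b_{d+1} = n+1` (as an integer). -/
def extNth (n d : ℕ) (B : Finset ℕ) (j : ℕ) : ℤ :=
  if j = 0 then 0 else if j ≤ d then (nthElt B j : ℤ) else (n : ℤ) + 1

/-- A series is left-aligned if it starts with `+` and ends with `-`. -/
def LeftAligned (l : List Bool) : Prop :=
  l.head? = some true ∧ l.getLast? = some false

/-- A series is right-aligned if it starts with `-` and ends with `+`. -/
def RightAligned (l : List Bool) : Prop :=
  l.head? = some false ∧ l.getLast? = some true

/-- `𝒮̄_{p,i}(n,d)`: co-signotopes in `𝒮̄_p(n,d)` whose only nonempty `+`-component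
is `𝒞^τ_i` (i.e. every `+`-subset lies in `𝒞^τ_i`). -/
noncomputable def coSigOnly (n d p i : ℕ) : Set (Finset ℕ → Bool) :=
  {τ | IsCoSignotope n d τ ∧ plusCount τ = p ∧ ∀ B, τ B = true → B ∈ comp n d τ i}

/-- `Z(d,i)`: points `(a_1,…,a_d) ∈ ℤ_{>0}^d` (0-indexed in Lean) with `a_j ≥ a_{j-1}`
for `j ∈ [2,i]` and `a_j ≥ a_{j+1}` for `j ∈ [i+1,d-1]` (1-based indices). -/
def ZSet (d i : ℕ) : Set (Fin d → ℤ) :=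
  {a | (∀ j, 0 < a j) ∧
    (∀ j k : Fin d, (j : ℕ) + 1 = (k : ℕ) → (k : ℕ) + 1 ≤ i → a j ≤ a k) ∧
    (∀ j k : Fin d, (j : ℕ) + 1 = (k : ℕ) → i ≤ (j : ℕ) → a k ≤ a j)}

/-- A `(d,i)`-Ferrers diagram with respect to `p`. -/
def IsFerrers (d i p : ℕ) (F : Set (Fin d → ℤ)) : Prop :=
  F ⊆ ZSet d i ∧ F.ncard = p ∧
  ∀ a ∈ F, ∀ a' ∈ ZSet d i, (∀ j, a' j ≤ a j) → a' ∈ F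

/-- The number of `(d,i)`-Ferrers diagrams with respect to `p`. -/
noncomputable def ferrersCount (d i p : ℕ) : ℕ :=
  {F : Set (Fin d → ℤ) | IsFerrers d i p F}.ncard

/-- `f_{n,d,i,j}` (here `j` is the 1-based coordinate index). -/
def fFun (n d i j : ℕ) (x : ℕ) : ℤ :=
  if j ≤ i then (x : ℤ) - j + 1 else ((n : ℤ) - x) - ((d : ℤ) - j) + 1

/-- `g_{n,d,i}` maps a `d`-subset `B = (b_1 < … < b_d)` to
`(f_{n,d,i,1}(b_1), …, f_{n,d,i,d}(b_d))`. -/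
def gMap (n d i : ℕ) (B : Finset ℕ) : Fin d → ℤ :=
  fun k => fFun n d i ((k : ℕ) + 1) (nthElt B ((k : ℕ) + 1))

/-- A sparse composition of `p` of length `d+1`. -/
def IsSparseComposition (d p : ℕ) (c : Fin (d + 1) → ℕ) : Prop :=
  (∑ i, c i) = p ∧
  ∀ i : Fin (d + 1), 1 ≤ (i : ℕ) →
    c i = 0 ∨ c ⟨(i : ℕ) - 1, lt_of_le_of_lt (Nat.sub_le _ _) i.isLt⟩ = 0

/-- The component `τ_i` of the `+`-component decomposition `Δ(τ)`:
the sign function whose `+`-set is `𝒞^τ_i`. -/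
noncomputable def compFun (n d : ℕ) (τ : Finset ℕ → Bool) (i : ℕ) : Finset ℕ → Bool :=
  ofPlusSet (comp n d τ i)

/-- Keep the `i` smallest elements of `B` and shift the others by `ñ - n`
(this is `g⁻¹_{ñ,d,i} ∘ g_{n,d,i}` on `d`-subsets). -/
def gammaSet (n tn i : ℕ) (B : Finset ℕ) : Finset ℕ :=
  ((B.sort (· ≤ ·)).mapIdx fun k x => if k < i then x else x + tn - n).toFinset

/-- The map `h_{n,ñ,d,p,i}` on sign functions. -/
noncomputable def hFun (n tn i : ℕ) (τ : Finset ℕ → Bool) : Finset ℕ → Bool :=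
  ofPlusSet {A | ∃ B, τ B = true ∧ A = gammaSet n tn i B}

open Classical in
/-- `γ_{τ,ñ}(B)`: replace `b_j` by `b_j + ñ - n` whenever the `(τ,B,j)`-series is
right-aligned. -/
noncomputable def gammaFun (n tn : ℕ) (τ : Finset ℕ → Bool) (B : Finset ℕ) : Finset ℕ :=
  B.image fun x => if RightAligned (series n τ (B.erase x)) then x + tn - n else x

/-- The simple bijection `φ_{n,ñ,d,p}` on sign functions. -/
noncomputable def phiFun (n tn : ℕ) (τ : Finset ℕ → Bool) : Finset ℕ → Bool :=
  ofPlusSet {A | ∃ B, τ B = true ∧ A = gammaFun n tn τ B}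

/-!
On increasing enumerations, `g_{n,d,i}` becomes the injective map `coords`, which sends the source
subset `S_{n,d,i}` to `(1, …, 1)`, the least point of `Z(d,i)`. Lowering coordinates means moving
entries towards the source: down at the first `i` positions, up at the others.

A series with a `+` is filled with `+` on one side of it. If two enumerations agree at an entry and
the series of one is filled to the left of it, that of the other to the right, then there are at
least `n - d + 1` `+`-subsets. For `p ≤ n - d` this forbids the side of filling at a given position
to change along an edge of `G_{n,d}[τ]`. At the source every position is filled towards the source,
hence so it is throughout the component, and the image of the `+`-subsets is closed under lowering
coordinates.

Conversely, in a diagram with `p` points the `i`-th coordinate of one point and the `(i+1)`-st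
coordinate of another sum to at most `p + 1`, by counting points on two axes. So the diagram lies in
the image of `coords`, and the entries completing a common facet to `+`-subsets all lie in the same
one of the two coordinate blocks. Moving such an entry changes all coordinates in the same
direction, which makes each series monotone.
-/

section SignChanges

lemma signChanges_cons_cons (a b : Bool) (l : List Bool) :
    signChanges (a :: b :: l) = (if a = b then 0 else 1) + signChanges (b :: l) := by
  by_cases h : a = b <;> simp [signChanges, h, Nat.add_comm]

lemma signChanges_cons_eq_zero_iff {a : Bool} {l : List Bool} :
    signChanges (a :: l) = 0 ↔ ∀ x ∈ l, x = a := by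
  induction l generalizing a with
  | nil => simp [signChanges]
  | cons b l ih =>
    rw [signChanges_cons_cons, Nat.add_eq_zero_iff, ih, List.forall_mem_cons]
    by_cases hab : a = b
    · simp [hab]
    · simp [hab, Ne.symm hab]

lemma signChanges_le_one_iff {l : List Bool} :
    signChanges l ≤ 1 ↔ l.Pairwise (· ≤ ·) ∨ l.Pairwise (· ≥ ·) := by
  induction l with
  | nil => simp [signChanges]
  | cons a l ih =>
    cases l with
    | nil => simp [signChanges]
    | cons b l =>
      by_cases hab : a = b
      · subst hab
        rw [signChanges_cons_cons, if_pos rfl, Nat.zero_add, ih]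
        simp
      · rw [signChanges_cons_cons, if_neg hab, add_le_iff_nonpos_right, Nat.le_zero,
          signChanges_cons_eq_zero_iff]
        constructor
        · intro hl
          have hconst : ∀ x ∈ b :: l, x = b := List.forall_mem_cons.2 ⟨rfl, hl⟩
          have hbl (r : Bool → Bool → Prop) (hr : r b b) : (b :: l).Pairwise r :=
            List.pairwise_of_forall_mem_list fun x hx y hy => by rwa [hconst x hx, hconst y hy]
          exact (le_total a b).imp
            (fun h => List.pairwise_cons.2 ⟨fun x hx => hconst x hx ▸ h, hbl _ le_rfl⟩)
            (fun h => List.pairwise_cons.2 ⟨fun x hx => hconst x hx ▸ h, hbl _ le_rfl⟩)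
        · simp only [List.pairwise_cons, List.forall_mem_cons]
          rintro (⟨⟨hle, -⟩, hl, -⟩ | ⟨⟨hle, -⟩, hl, -⟩) x hx
          · exact le_antisymm ((Bool.lt_iff.1 (hle.lt_of_ne hab)).2 ▸ Bool.le_true x) (hl x hx)
          · exact le_antisymm (hl x hx)
              ((Bool.lt_iff.1 (hle.lt_of_ne' hab)).1 ▸ Bool.false_le x)

lemma pairwise_sort_iff {α : Type*} [LinearOrder α] {s : Finset α} {r : α → α → Prop} :
    (s.sort (· ≤ ·)).Pairwise r ↔ ∀ x ∈ s, ∀ y ∈ s, x < y → r x y := by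
  have hlt := (Finset.sortedLT_sort s).pairwise
  constructor
  · intro h x hx y hy
    refine List.Pairwise.forall_of_forall_of_flip (R := fun x y => x < y → r x y)
      (fun x _ hxx => (lt_irrefl x hxx).elim) (h.imp fun {x y} hr (_ : x < y) => hr)
      (hlt.imp fun hlt hgt => (lt_asymm hlt hgt).elim) ?_ ?_
    all_goals rwa [Finset.mem_sort]
  · refine fun h => hlt.imp_of_mem fun hx hy => h _ ?_ _ ?_
    all_goals rwa [← Finset.mem_sort (· ≤ ·)]

lemma signChanges_map_sort_le_one_iff {α : Type*} [LinearOrder α] {s : Finset α} {f : α → Bool} :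
    signChanges ((s.sort (· ≤ ·)).map f) ≤ 1 ↔ MonotoneOn f s ∨ AntitoneOn f s := by
  rw [signChanges_le_one_iff, List.pairwise_map, List.pairwise_map, pairwise_sort_iff,
    pairwise_sort_iff, monotoneOn_iff_forall_lt, antitoneOn_iff_forall_lt]
  exact Iff.rfl

end SignChanges

section Enumeration

variable {n d i : ℕ} {b b' : Fin d → ℕ} {k : Fin d} {y : ℕ}

/-- The set of entries of a tuple `b`. -/
def valueSet (b : Fin d → ℕ) : Finset ℕ := Finset.univ.image b

/-- The entries of `b` at positions other than `k`. For a strictly increasing `b`, this is the set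
`B_{k+1}` of the paper, where `B = valueSet b`. -/
def facet (b : Fin d → ℕ) (k : Fin d) : Finset ℕ := (Finset.univ.erase k).image b

/-- The strictly increasing tuples in `[n]`, i.e. the increasing enumerations of the `d`-subsets. -/
def IsEnumeration (n : ℕ) (b : Fin d → ℕ) : Prop :=
  StrictMono b ∧ ∀ k, b k ∈ Finset.Icc 1 n

/-- The map `g_{n,d,i}` on increasing enumerations. The index `k` is 0-based, which accounts for the
constants. -/
def coords (n i : ℕ) (b : Fin d → ℕ) : Fin d → ℤ :=
  fun k => if (k : ℕ) < i then (b k : ℤ) - k else n + 2 + k - d - b k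

lemma mem_valueSet {x : ℕ} : x ∈ valueSet b ↔ ∃ k, b k = x := by simp [valueSet]

lemma mem_facet {x : ℕ} : x ∈ facet b k ↔ ∃ l ≠ k, b l = x := by simp [facet]

lemma facet_update : facet (Function.update b k y) k = facet b k :=
  Finset.image_congr fun _ hl => Function.update_of_ne (Finset.ne_of_mem_erase hl) y b

lemma insert_facet : insert (b k) (facet b k) = valueSet b := by
  rw [facet, ← Finset.image_insert, Finset.insert_erase (Finset.mem_univ k), valueSet]

lemma valueSet_update : valueSet (Function.update b k y) = insert y (facet b k) := by
  rw [← insert_facet (k := k), facet_update, Function.update_self]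

lemma apply_notMem_facet (hb : Function.Injective b) : b k ∉ facet b k := by
  rw [mem_facet]
  rintro ⟨l, hlk, hl⟩
  exact hlk (hb hl)

lemma erase_valueSet (hb : Function.Injective b) : (valueSet b).erase (b k) = facet b k := by
  rw [← insert_facet (k := k), Finset.erase_insert (apply_notMem_facet hb)]

lemma card_valueSet (hb : Function.Injective b) : (valueSet b).card = d := by
  rw [valueSet, Finset.card_image_of_injective _ hb, Finset.card_univ, Fintype.card_fin]

lemma nthElt_valueSet (hb : StrictMono b) : nthElt (valueSet b) (k + 1) = b k := by
  have hcard := card_valueSet hb.injective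
  have hk := congrFun (Finset.orderEmbOfFin_unique hcard (fun _ => mem_valueSet.2 ⟨_, rfl⟩) hb) k
  rw [nthElt, Nat.add_sub_cancel, List.getD_eq_getElem _ _ (by simp [hcard]), hk,
    Finset.orderEmbOfFin_apply]
  rfl

lemma valueSet_inj (hb : StrictMono b) (hb' : StrictMono b') :
    valueSet b = valueSet b' ↔ b = b' := by
  refine ⟨fun h => funext fun k => ?_, congrArg valueSet⟩
  rw [← nthElt_valueSet hb, h, nthElt_valueSet hb']

lemma gMap_valueSet (hb : StrictMono b) : gMap n d i (valueSet b) = coords n i b := by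
  funext k
  simp only [gMap, fFun, coords, nthElt_valueSet hb]
  split_ifs <;> push_cast <;> omega

lemma coords_injective : Function.Injective (coords n i : (Fin d → ℕ) → Fin d → ℤ) := by
  intro b b' h
  funext k
  have hk := congrFun h k
  unfold coords at hk
  split_ifs at hk <;> omega

lemma coords_le_coords_iff :
    coords n i b ≤ coords n i b' ↔ ∀ k : Fin d,
      ((k : ℕ) < i → b k ≤ b' k) ∧ (i ≤ (k : ℕ) → b' k ≤ b k) := by
  refine forall_congr' fun k => ?_
  rcases lt_or_ge (k : ℕ) i with hk | hk
  · simp [coords, hk]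
  · simp only [coords, hk, hk.not_gt, if_false, false_imp_iff, true_imp_iff, true_and]
    omega

lemma IsEnumeration.valueSet_subset (hb : IsEnumeration n b) : valueSet b ⊆ Finset.Icc 1 n :=
  Finset.image_subset_iff.2 fun k _ => hb.2 k

lemma exists_isEnumeration {B : Finset ℕ} (hB : B ⊆ Finset.Icc 1 n) (hcard : B.card = d) :
    ∃ b : Fin d → ℕ, IsEnumeration n b ∧ valueSet b = B :=
  ⟨B.orderEmbOfFin hcard,
    ⟨(B.orderEmbOfFin hcard).strictMono, fun k => hB (B.orderEmbOfFin_mem hcard k)⟩,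
    Finset.image_orderEmbOfFin_univ B hcard⟩

lemma IsEnumeration.succ_le_apply (hb : IsEnumeration n b) (k : Fin d) : k + 1 ≤ b k := by
  have hcard := Finset.card_le_card_of_injOn (s := Finset.Iic k) (t := Finset.Icc 1 (b k)) b
    (fun l hl => Finset.mem_Icc.2
      ⟨(Finset.mem_Icc.1 (hb.2 l)).1, hb.1.monotone (Finset.mem_Iic.1 hl)⟩)
    hb.1.injective.injOn
  simpa using hcard

lemma IsEnumeration.apply_add_le (hb : IsEnumeration n b) (k : Fin d) : b k + d ≤ n + 1 + k := by
  have hcard := Finset.card_le_card_of_injOn (s := Finset.Ici k) (t := Finset.Icc (b k) n) b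
    (fun l hl => Finset.mem_Icc.2
      ⟨hb.1.monotone (Finset.mem_Ici.1 hl), (Finset.mem_Icc.1 (hb.2 l)).2⟩)
    hb.1.injective.injOn
  have hk := Finset.mem_Icc.1 (hb.2 k)
  rw [Fin.card_Ici, Nat.card_Icc] at hcard
  omega

lemma IsEnumeration.coords_mem_ZSet (hb : IsEnumeration n b) : coords n i b ∈ ZSet d i := by
  refine ⟨fun k => ?_, fun j k hjk hk => ?_, fun j k hjk hj => ?_⟩
  · have hlow := hb.succ_le_apply k
    have hhigh := hb.apply_add_le k
    unfold coords
    split_ifs <;> omega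
  all_goals
    have hlt : b j < b k := hb.1 (Fin.lt_def.2 (by omega))
    unfold coords
    split_ifs <;> omega

lemma injOn_gMap : Set.InjOn (gMap n d i) {B | B ⊆ Finset.Icc 1 n ∧ B.card = d} := by
  rintro B ⟨hB, hBcard⟩ B' ⟨hB', hBcard'⟩ h
  obtain ⟨b, hb, rfl⟩ := exists_isEnumeration hB hBcard
  obtain ⟨b', hb', rfl⟩ := exists_isEnumeration hB' hBcard'
  rw [gMap_valueSet hb.1, gMap_valueSet hb'.1] at h
  rw [coords_injective h]

end Enumeration

section Box

variable {n d i : ℕ} {b : Fin d → ℕ} {a : Fin d → ℤ}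

lemma exists_isEnumeration_cast_eq {c : Fin d → ℤ}
    (hstep : ∀ j k : Fin d, (j : ℕ) + 1 = k → c j < c k)
    (hfirst : ∀ k : Fin d, (k : ℕ) = 0 → 1 ≤ c k)
    (hlast : ∀ k : Fin d, (k : ℕ) + 1 = d → c k ≤ n) :
    ∃ b : Fin d → ℕ, IsEnumeration n b ∧ ∀ k, (b k : ℤ) = c k := by
  cases d with
  | zero => exact ⟨Fin.elim0, ⟨fun j => j.elim0, fun j => j.elim0⟩, fun j => j.elim0⟩
  | succ d =>
    have hmono : StrictMono c := Fin.strictMono_iff_lt_succ.2 fun j => hstep _ _ (by simp)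
    have hlow (k) : 1 ≤ c k := (hfirst 0 rfl).trans (hmono.monotone (Fin.zero_le k))
    have hhigh (k) : c k ≤ n := (hmono.monotone (Fin.le_last k)).trans (hlast (Fin.last d) rfl)
    obtain ⟨b, hb⟩ : ∃ b : Fin (d + 1) → ℕ, ∀ k, (b k : ℤ) = c k :=
      ⟨fun k => (c k).toNat, fun k => Int.toNat_of_nonneg (by linarith [hlow k])⟩
    refine ⟨b, ⟨fun j k hjk => ?_, fun k => Finset.mem_Icc.2 ?_⟩, hb⟩
    · rw [← Nat.cast_lt (α := ℤ), hb, hb]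
      exact hmono hjk
    · have := hlow k
      have := hhigh k
      have := hb k
      omega

/-- On the two weakly monotone blocks of `Z(d,i)` the candidate preimage is strictly increasing for
free, so only the block boundary and the two extreme entries have to be controlled. -/
lemma exists_coords_eq (hi : i ≤ d) (ha : a ∈ ZSet d i)
    (hapex : ∀ m : Fin d, (m : ℕ) + 1 = i ∨ (m : ℕ) = i → a m + d ≤ n + 1)
    (hapexes : ∀ j k : Fin d, (j : ℕ) + 1 = i → (k : ℕ) = i → a j + a k + d ≤ n + 2) :
    ∃ b, IsEnumeration n b ∧ coords n i b = a := by
  obtain ⟨hpos, hinc, hdec⟩ := ha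
  obtain ⟨b, hb, hbc⟩ := exists_isEnumeration_cast_eq (n := n)
    (c := fun k => if (k : ℕ) < i then a k + k else n + 2 + k - d - a k)
    (fun j k hjk => by
      rcases lt_trichotomy (k : ℕ) i with hk | hk | hk
      · have := hinc j k hjk hk
        split_ifs <;> omega
      · have := hapexes j k (by omega) hk
        split_ifs <;> omega
      · have := hdec j k hjk (by omega)
        split_ifs <;> omega)
    (fun k hk => by
      have := hpos k
      have := hapex k
      split_ifs <;> omega)
    (fun k hk => by
      have := hpos k
      have := hapex k
      split_ifs <;> omega)
  refine ⟨b, hb, funext fun k => ?_⟩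
  simp only [coords, hbc]
  split_ifs <;> omega

lemma IsEnumeration.exists_coords_eq_of_le (hi : i ≤ d) (hb : IsEnumeration n b) (ha : a ∈ ZSet d i)
    (hab : a ≤ coords n i b) : ∃ b', IsEnumeration n b' ∧ coords n i b' = a := by
  refine exists_coords_eq hi ha (fun m _ => ?_) fun j k hj hk => ?_
  · have hlow := hb.succ_le_apply m
    have hhigh := hb.apply_add_le m
    have ham := hab m
    simp only [coords] at ham
    split_ifs at ham <;> omega
  · have hlt : b j < b k := hb.1 (Fin.lt_def.2 (by omega))
    have haj := hab j
    have hak := hab k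
    simp only [coords, show (j : ℕ) < i by omega, show ¬ (k : ℕ) < i by omega, if_true,
      if_false] at haj hak
    omega

/-- The increasing enumeration of the source subset `S_{n,d,i}`. -/
def sourceTuple (n d i : ℕ) : Fin d → ℕ :=
  fun k => if (k : ℕ) < i then k + 1 else n - d + k + 1

lemma isEnumeration_sourceTuple (hdn : d ≤ n) : IsEnumeration n (sourceTuple n d i) := by
  refine ⟨fun j k hjk => ?_, fun k => Finset.mem_Icc.2 ?_⟩
  · unfold sourceTuple
    split_ifs <;> omega
  · unfold sourceTuple
    split_ifs <;> omega

lemma valueSet_sourceTuple (hdn : d ≤ n) (hi : i ≤ d) :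
    valueSet (sourceTuple n d i) = sourceSubset n d i := by
  ext x
  simp only [mem_valueSet, sourceSubset, Finset.mem_union, Finset.mem_Icc]
  constructor
  · rintro ⟨k, rfl⟩
    unfold sourceTuple
    split_ifs <;> omega
  · rintro (hx | hx)
    · exact ⟨⟨x - 1, by omega⟩, by grind [sourceTuple]⟩
    · exact ⟨⟨x - (n - d) - 1, by omega⟩, by grind [sourceTuple]⟩

lemma coords_sourceTuple (hdn : d ≤ n) : coords n i (sourceTuple n d i) = 1 := by
  funext k
  simp only [coords, sourceTuple, Pi.one_apply]
  split_ifs <;> omega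

lemma one_le_of_mem_ZSet (ha : a ∈ ZSet d i) : 1 ≤ a := ha.1

end Box

section SourceStep

variable {n d i : ℕ} {b b' : Fin d → ℕ}

lemma IsEnumeration.update {k : Fin d} {y : ℕ} (hb : IsEnumeration n b) (hy : y ∈ Finset.Icc 1 n)
    (hlt : ∀ l < k, b l < y) (hgt : ∀ l, k < l → y < b l) :
    IsEnumeration n (Function.update b k y) := by
  constructor
  · intro l m hlm
    rcases eq_or_ne l k with rfl | hl
    · rw [Function.update_self, Function.update_of_ne hlm.ne']
      exact hgt m hlm
    rcases eq_or_ne m k with rfl | hm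
    · rw [Function.update_self, Function.update_of_ne hl]
      exact hlt l hlm
    · rw [Function.update_of_ne hl, Function.update_of_ne hm]
      exact hb.1 hlm
  · exact (Function.forall_update_iff b fun _ x => x ∈ Finset.Icc 1 n).2 ⟨hy, fun l _ => hb.2 l⟩

lemma coords_update_le {k : Fin d} (h : coords n i b' ≤ coords n i b) :
    coords n i (Function.update b k (b' k)) ≤ coords n i b ∧
      coords n i b' ≤ coords n i (Function.update b k (b' k)) := by
  rw [coords_le_coords_iff] at h
  simp only [coords_le_coords_iff]
  constructor <;> intro l <;> rcases eq_or_ne l k with rfl | hl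
  · simpa using h l
  · simp [hl]
  · simp
  · simpa [hl] using h l

lemma exists_isEnumeration_update (hb : IsEnumeration n b) (hb' : IsEnumeration n b')
    (hle : coords n i b' ≤ coords n i b) (hne : b' ≠ b) :
    ∃ k, b' k ≠ b k ∧ IsEnumeration n (Function.update b k (b' k)) := by
  rw [coords_le_coords_iff] at hle
  by_cases hleft : ∃ k : Fin d, (k : ℕ) < i ∧ b' k ≠ b k
  · obtain ⟨k, ⟨hki, hk⟩, hmin⟩ := exists_minimal_of_wellFoundedLT _ hleft
    have hlt : b' k < b k := lt_of_le_of_ne ((hle k).1 hki) hk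
    refine ⟨k, hk, hb.update (hb'.2 k) (fun l hl => ?_) fun l hl => hlt.trans (hb.1 hl)⟩
    have hbl : b' l = b l := by
      by_contra hne
      exact (hmin ⟨(Fin.lt_def.1 hl).trans hki, hne⟩ hl.le).not_gt hl
    exact hbl ▸ hb'.1 hl
  · push Not at hleft
    obtain ⟨k, hk, hmax⟩ := exists_maximal_of_wellFoundedGT _ (Function.ne_iff.1 hne)
    have hlt : b k < b' k := by
      refine lt_of_le_of_ne ((hle k).2 ?_) hk.symm
      by_contra! hki
      exact hk (hleft k hki)
    refine ⟨k, hk, hb.update (hb'.2 k) (fun l hl => (hb.1 hl).trans hlt) fun l hl => ?_⟩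
    have hbl : b' l = b l := by
      by_contra hne
      exact (hmax hne hl.le).not_gt hl
    exact hbl ▸ hb'.1 hl

/-- `SourceStep n i b b'` changes a single entry of `b` and decreases the coordinates: the entry
moves down at a position `< i` and up at a position `≥ i`, towards the `i`-th source subset. -/
def SourceStep (n i : ℕ) (b b' : Fin d → ℕ) : Prop :=
  IsEnumeration n b' ∧ coords n i b' ≤ coords n i b ∧ ∃ k, ∃ y ≠ b k, b' = Function.update b k y

lemma reflTransGen_sourceStep (hb : IsEnumeration n b) (hb' : IsEnumeration n b')
    (hle : coords n i b' ≤ coords n i b) : Relation.ReflTransGen (SourceStep n i) b b' := by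
  induction hN : Finset.univ.filter (fun k => b' k ≠ b k) using Finset.strongInduction
    generalizing b with
  | H s ih =>
    rcases eq_or_ne b' b with rfl | hne
    · rfl
    obtain ⟨k, hk, hupdate⟩ := exists_isEnumeration_update hb hb' hle hne
    obtain ⟨hle₁, hle₂⟩ := coords_update_le (k := k) hle
    refine .head ⟨hupdate, hle₁, k, b' k, hk, rfl⟩ (ih _ ?_ hupdate hle₂ rfl)
    subst hN
    refine Finset.ssubset_iff_of_subset (fun l => ?_) |>.2 ⟨k, by simp [hk], by simp⟩
    rcases eq_or_ne l k with rfl | hl <;> simp [*]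

lemma gAdj_valueSet_update {k : Fin d} {y : ℕ} (hb : IsEnumeration n b) (hy : y ≠ b k)
    (hb' : IsEnumeration n (Function.update b k y)) :
    GAdj n d (valueSet b) (valueSet (Function.update b k y)) := by
  have hyk : Function.update b k y k = y := Function.update_self ..
  have hyl (l) (hl : l ≠ k) : Function.update b k y l = b l := Function.update_of_ne hl ..
  refine ⟨hb.valueSet_subset, card_valueSet hb.1.injective, hb'.valueSet_subset,
    card_valueSet hb'.1.injective, b k, mem_valueSet.2 ⟨k, rfl⟩, y, hyk ▸ hb'.2 k, ?_, ?_, ?_⟩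
  · rw [← insert_facet (k := k), Finset.mem_insert, not_or]
    refine ⟨hy, ?_⟩
    have := apply_notMem_facet (k := k) hb'.1.injective
    rwa [facet_update, hyk] at this
  · rw [erase_valueSet hb.1.injective, valueSet_update]
  · rw [erase_valueSet hb.1.injective]
    simp only [mem_facet]
    rintro _ ⟨l, hl, rfl⟩
    rcases hl.lt_or_gt with hlk | hlk
    · have h₁ := hb.1 hlk
      have h₂ := hb'.1 hlk
      rw [hyk, hyl l hl] at h₂
      exact fun h => (lt_min h₁ h₂).not_gt h.1
    · have h₁ := hb.1 hlk
      have h₂ := hb'.1 hlk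
      rw [hyk, hyl l hl] at h₂
      exact fun h => (max_lt h₁ h₂).not_gt h.2

lemma GAdj.exists_update {B' : Finset ℕ} (hb : IsEnumeration n b)
    (h : GAdj n d (valueSet b) B') :
    ∃ k y, IsEnumeration n (Function.update b k y) ∧ B' = valueSet (Function.update b k y) := by
  obtain ⟨-, -, -, -, x, hx, y, hy, hyB, rfl, hbetween⟩ := h
  obtain ⟨k, rfl⟩ := mem_valueSet.1 hx
  rw [erase_valueSet hb.1.injective] at hbetween ⊢
  have hbl (l) (hl : l ≠ k) : y ≠ b l ∧ ¬(min (b k) y < b l ∧ b l < max (b k) y) :=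
    ⟨fun h => hyB (mem_valueSet.2 ⟨l, h.symm⟩), hbetween _ (mem_facet.2 ⟨l, hl, rfl⟩)⟩
  refine ⟨k, y, hb.update hy (fun l hl => ?_) fun l hl => ?_, valueSet_update.symm⟩
  · have := hb.1 hl
    have := hbl l hl.ne
    omega
  · have := hb.1 hl
    have := hbl l hl.ne'
    omega

end SourceStep

section Alignment

variable {n d i p : ℕ} {τ : Finset ℕ → Bool} {D E : Finset ℕ} {b b' : Fin d → ℕ}

lemma isCoSignotope_iff :
    IsCoSignotope n d τ ↔ (∀ A, τ A = true → A ⊆ Finset.Icc 1 n ∧ A.card = d) ∧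
      ∀ B ⊆ Finset.Icc 1 n, B.card = d → ∀ x ∈ B,
        MonotoneOn (fun y => τ (insert y (B.erase x))) ↑(Finset.Icc 1 n \ B.erase x) ∨
        AntitoneOn (fun y => τ (insert y (B.erase x))) ↑(Finset.Icc 1 n \ B.erase x) := by
  simp only [IsCoSignotope, series, signChanges_map_sort_le_one_iff]

lemma IsCoSignotope.monotoneOn_or_antitoneOn {x : ℕ} (hτ : IsCoSignotope n d τ) (hx : x ∉ D)
    (hxD : τ (insert x D) = true) :
    MonotoneOn (fun y => τ (insert y D)) ↑(Finset.Icc 1 n \ D) ∨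
      AntitoneOn (fun y => τ (insert y D)) ↑(Finset.Icc 1 n \ D) := by
  obtain ⟨hsub, hcard⟩ := hτ.1 _ hxD
  simpa only [Finset.erase_insert hx] using
    (isCoSignotope_iff.1 hτ).2 _ hsub hcard x (Finset.mem_insert_self x D)

lemma IsCoSignotope.mem_Icc_sdiff {x : ℕ} (hτ : IsCoSignotope n d τ) (hx : x ∉ D)
    (hxD : τ (insert x D) = true) : x ∈ Finset.Icc 1 n \ D :=
  Finset.mem_sdiff.2 ⟨(hτ.1 _ hxD).1 (Finset.mem_insert_self x D), hx⟩

lemma IsCoSignotope.finite_plus (hτ : IsCoSignotope n d τ) : {A | τ A = true}.Finite :=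
  (Finset.finite_toSet (Finset.Icc 1 n).powerset).subset fun A hA =>
    Finset.mem_coe.2 (Finset.mem_powerset.2 (hτ.1 A hA).1)

/-- In the series through `D`, all entries up to `x` are `+`. -/
def LeftFilled (n : ℕ) (τ : Finset ℕ → Bool) (D : Finset ℕ) (x : ℕ) : Prop :=
  ∀ y ∈ Finset.Icc 1 n \ D, y ≤ x → τ (insert y D) = true

/-- In the series through `D`, all entries from `x` on are `+`. -/
def RightFilled (n : ℕ) (τ : Finset ℕ → Bool) (D : Finset ℕ) (x : ℕ) : Prop :=
  ∀ y ∈ Finset.Icc 1 n \ D, x ≤ y → τ (insert y D) = true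

lemma leftFilled_or_rightFilled {x : ℕ} (hτ : IsCoSignotope n d τ) (hx : x ∉ D)
    (hxD : τ (insert x D) = true) : LeftFilled n τ D x ∨ RightFilled n τ D x := by
  have hmem := hτ.mem_Icc_sdiff hx hxD
  refine (hτ.monotoneOn_or_antitoneOn hx hxD).symm.imp
    (fun hanti y hy hyx => ?_) fun hmono y hy hxy => ?_
  · exact Bool.le_iff_imp.1 (hanti hy hmem hyx) hxD
  · exact Bool.le_iff_imp.1 (hmono hmem hy hxy) hxD

lemma LeftFilled.of_plus {x y : ℕ} (hL : LeftFilled n τ D x) (hτ : IsCoSignotope n d τ)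
    (hx : x ∉ D) (hxD : τ (insert x D) = true) (hy : y ∉ D) (hyD : τ (insert y D) = true) :
    LeftFilled n τ D y := by
  intro z hz hzy
  rcases hτ.monotoneOn_or_antitoneOn hx hxD with hmono | hanti
  · rcases le_total z x with hzx | hxz
    · exact hL z hz hzx
    · exact Bool.le_iff_imp.1 (hmono (hτ.mem_Icc_sdiff hx hxD) hz hxz) hxD
  · exact Bool.le_iff_imp.1 (hanti hz (hτ.mem_Icc_sdiff hy hyD) hzy) hyD

lemma RightFilled.of_plus {x y : ℕ} (hR : RightFilled n τ D x) (hτ : IsCoSignotope n d τ)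
    (hx : x ∉ D) (hxD : τ (insert x D) = true) (hy : y ∉ D) (hyD : τ (insert y D) = true) :
    RightFilled n τ D y := by
  intro z hz hyz
  rcases hτ.monotoneOn_or_antitoneOn hx hxD with hmono | hanti
  · exact Bool.le_iff_imp.1 (hmono (hτ.mem_Icc_sdiff hy hyD) hz hyz) hyD
  · rcases le_total x z with hxz | hzx
    · exact hR z hz hxz
    · exact Bool.le_iff_imp.1 (hanti hz (hτ.mem_Icc_sdiff hx hxD) hzx) hxD

lemma insert_inter_insert_of_ne {α : Type*} [DecidableEq α] {s : Finset α} {x y : α}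
    (hxy : x ≠ y) : insert x s ∩ insert y s = s := by
  grind

/-- Two common members `A ≠ A'` would give `D = A ∩ A' = E`, and then both arise from `v`. -/
lemma card_image_insert_inter_le_one {X Y : Finset ℕ} {v : ℕ} (hX : ∀ x ∈ X, x ∉ D ∧ x ≤ v)
    (hY : ∀ y ∈ Y, y ∉ E ∧ v ≤ y) :
    (X.image (insert · D) ∩ Y.image (insert · E)).card ≤ 1 := by
  refine Finset.card_le_one.2 fun A hA A' hA' => ?_
  simp only [Finset.mem_inter, Finset.mem_image] at hA hA'
  obtain ⟨⟨x, hx, rfl⟩, y, hy, hxy⟩ := hA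
  obtain ⟨⟨x', hx', rfl⟩, y', hy', hxy'⟩ := hA'
  by_contra hne
  have hDE : D = E := by
    rw [← insert_inter_insert_of_ne (s := D) (x := x) (y := x') (by grind), ← hxy, ← hxy',
      insert_inter_insert_of_ne (by grind)]
  subst hDE
  have hyx : y = x := (Finset.insert_inj (hY y hy).1).1 hxy
  have hyx' : y' = x' := (Finset.insert_inj (hY y' hy').1).1 hxy'
  have hxv : x = v := le_antisymm (hX x hx).2 (hyx ▸ (hY y hy).2)
  have hxv' : x' = v := le_antisymm (hX x' hx').2 (hyx' ▸ (hY y' hy').2)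
  exact hne (by rw [hxv, hxv'])

lemma le_card_Icc_sdiff_facet_left (hb : IsEnumeration n b) (k : Fin d) :
    b k ≤ (Finset.Icc 1 (b k) \ facet b k).card + k := by
  have hsub : facet b k ∩ Finset.Icc 1 (b k) ⊆ (Finset.Iio k).image b := by
    intro x hx
    obtain ⟨hxD, hxk⟩ := Finset.mem_inter.1 hx
    obtain ⟨l, hl, rfl⟩ := mem_facet.1 hxD
    have hlk := hb.1.le_iff_le.1 (Finset.mem_Icc.1 hxk).2
    exact Finset.mem_image_of_mem b (Finset.mem_Iio.2 (hlk.lt_of_ne hl))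
  have hcard := (Finset.card_le_card hsub).trans Finset.card_image_le
  rw [Fin.card_Iio] at hcard
  rw [Finset.card_sdiff, Nat.card_Icc]
  omega

lemma le_card_Icc_sdiff_facet_right (hb : IsEnumeration n b) (k : Fin d) :
    n + 2 + k ≤ (Finset.Icc (b k) n \ facet b k).card + b k + d := by
  have hsub : facet b k ∩ Finset.Icc (b k) n ⊆ (Finset.Ioi k).image b := by
    intro x hx
    obtain ⟨hxD, hxk⟩ := Finset.mem_inter.1 hx
    obtain ⟨l, hl, rfl⟩ := mem_facet.1 hxD
    have hkl := hb.1.le_iff_le.1 (Finset.mem_Icc.1 hxk).1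
    exact Finset.mem_image_of_mem b (Finset.mem_Ioi.2 (hkl.lt_of_ne' hl))
  have hcard := (Finset.card_le_card hsub).trans Finset.card_image_le
  rw [Fin.card_Ioi] at hcard
  rw [Finset.card_sdiff, Nat.card_Icc]
  have := k.isLt
  omega

/-- The `≥ b k - k` subsets `insert y (facet b k)` to the left and the `≥ n + 2 - d + k - b k`
subsets `insert y (facet b' k)` to the right have at most one member in common. -/
lemma lt_plusCount_add {k : Fin d} (hfin : {A | τ A = true}.Finite) (hb : IsEnumeration n b)
    (hb' : IsEnumeration n b') (hk : b k = b' k) (hL : LeftFilled n τ (facet b k) (b k))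
    (hR : RightFilled n τ (facet b' k) (b' k)) : n < plusCount τ + d := by
  let X := Finset.Icc 1 (b k) \ facet b k
  let Y := Finset.Icc (b' k) n \ facet b' k
  let L := X.image (insert · (facet b k))
  let R := Y.image (insert · (facet b' k))
  have hXn : X ⊆ Finset.Icc 1 n \ facet b k :=
    Finset.sdiff_subset_sdiff (Finset.Icc_subset_Icc_right (Finset.mem_Icc.1 (hb.2 k)).2) le_rfl
  have hYn : Y ⊆ Finset.Icc 1 n \ facet b' k :=
    Finset.sdiff_subset_sdiff (Finset.Icc_subset_Icc_left (Finset.mem_Icc.1 (hb'.2 k)).1) le_rfl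
  have hX : ∀ x ∈ X, x ∉ facet b k ∧ x ≤ b k := by grind
  have hY : ∀ y ∈ Y, y ∉ facet b' k ∧ b k ≤ y := by grind
  have hplus : ((L ∪ R : Finset (Finset ℕ)) : Set (Finset ℕ)) ⊆ {A | τ A = true} := by
    intro A hA
    simp only [L, R, Finset.coe_union, Set.mem_union, Finset.mem_coe, Finset.mem_image] at hA
    rcases hA with ⟨x, hx, rfl⟩ | ⟨y, hy, rfl⟩
    · exact hL x (hXn hx) (hX x hx).2
    · exact hR y (hYn hy) (hk ▸ (hY y hy).2)
  have hcount : (L ∪ R).card ≤ plusCount τ := by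
    rw [plusCount, ← Set.ncard_coe_finset]
    exact Set.ncard_le_ncard hplus hfin
  have hcardL : L.card = X.card :=
    Finset.card_image_of_injOn fun x hx y _ h => (Finset.insert_inj (hX x hx).1).1 h
  have hcardR : R.card = Y.card :=
    Finset.card_image_of_injOn fun x hx y _ h => (Finset.insert_inj (hY x hx).1).1 h
  have hinter : (L ∩ R).card ≤ 1 := card_image_insert_inter_le_one hX hY
  have hunion := Finset.card_union_add_card_inter L R
  have hleft : b k ≤ X.card + k := le_card_Icc_sdiff_facet_left hb k
  have hright : n + 2 + k ≤ Y.card + b' k + d := le_card_Icc_sdiff_facet_right hb' k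
  omega

/-- Every series through the subset `valueSet b` is filled with `+` from `b k` towards the entry of
the `i`-th source subset: to the left at positions `k < i` and to the right at positions `k ≥ i`. -/
def IsAligned (n i : ℕ) (τ : Finset ℕ → Bool) (b : Fin d → ℕ) : Prop :=
  ∀ k : Fin d, ((k : ℕ) < i → LeftFilled n τ (facet b k) (b k)) ∧
    (i ≤ (k : ℕ) → RightFilled n τ (facet b k) (b k))

lemma isAligned_sourceTuple (hdn : d ≤ n)
    (hplus : τ (valueSet (sourceTuple n d i : Fin d → ℕ)) = true) :
    IsAligned n i τ (sourceTuple n d i : Fin d → ℕ) := by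
  intro k
  constructor <;> intro hk y hy hyk <;> rw [← insert_facet (k := k)] at hplus
  all_goals
    obtain ⟨hyn, hyD⟩ := Finset.mem_sdiff.1 hy
    have hy' := Finset.mem_Icc.1 hyn
    suffices hyk : y = sourceTuple n d i k by rwa [hyk]
    by_contra hne
    refine hyD (mem_facet.2 ?_)
  · simp only [sourceTuple, hk, if_true] at hne hyk
    exact ⟨⟨y - 1, by omega⟩, by grind, by grind [sourceTuple]⟩
  · simp only [sourceTuple, hk.not_gt, if_false] at hne hyk
    exact ⟨⟨y - (n - d) - 1, by omega⟩, by grind, by grind [sourceTuple]⟩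

lemma IsAligned.update {k : Fin d} {y : ℕ} (halign : IsAligned n i τ b)
    (hτ : IsCoSignotope n d τ) (hcount : plusCount τ + d ≤ n) (hb : IsEnumeration n b)
    (hb' : IsEnumeration n (Function.update b k y)) (hplus : τ (valueSet b) = true)
    (hplus' : τ (valueSet (Function.update b k y)) = true) :
    IsAligned n i τ (Function.update b k y) := by
  intro j
  have hj := apply_notMem_facet (k := j) hb.1.injective
  have hj' := apply_notMem_facet (k := j) hb'.1.injective
  rw [← insert_facet (k := j)] at hplus hplus'
  rcases eq_or_ne j k with rfl | hjk
  · rw [facet_update] at *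
    exact ⟨fun hi => ((halign j).1 hi).of_plus hτ hj hplus hj' hplus',
      fun hi => ((halign j).2 hi).of_plus hτ hj hplus hj' hplus'⟩
  · have heq : b j = Function.update b k y j := (Function.update_of_ne hjk y b).symm
    have hfilled := leftFilled_or_rightFilled hτ hj' hplus'
    refine ⟨fun hi => hfilled.resolve_right fun hR => ?_,
      fun hi => hfilled.resolve_left fun hL => ?_⟩
    · exact (lt_plusCount_add hτ.finite_plus hb hb' heq ((halign j).1 hi) hR).not_ge hcount
    · exact (lt_plusCount_add hτ.finite_plus hb' hb heq.symm hL ((halign j).2 hi)).not_ge hcount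

lemma isAligned_of_plusConn {B : Finset ℕ} (hi : i ≤ d) (hτ : IsCoSignotope n d τ)
    (hcount : plusCount τ + d ≤ n) (hsource : τ (sourceSubset n d i) = true)
    (hconn : plusConn n d τ (sourceSubset n d i) B) :
    ∃ b : Fin d → ℕ, IsEnumeration n b ∧ valueSet b = B ∧ IsAligned n i τ b := by
  have hdn : d ≤ n := by omega
  induction hconn with
  | refl =>
    refine ⟨sourceTuple n d i, isEnumeration_sourceTuple hdn, valueSet_sourceTuple hdn hi,
      isAligned_sourceTuple hdn ?_⟩
    rwa [valueSet_sourceTuple hdn hi]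
  | tail _ hstep ih =>
    obtain ⟨b, hb, rfl, halign⟩ := ih
    obtain ⟨hplus, hplus', hadj⟩ := hstep
    obtain ⟨k, y, hb', rfl⟩ := hadj.exists_update hb
    exact ⟨_, hb', rfl, halign.update hτ hcount hb hb' hplus hplus'⟩

lemma IsAligned.plus_of_sourceStep (halign : IsAligned n i τ b) (hstep : SourceStep n i b b') :
    τ (valueSet b') = true := by
  obtain ⟨hb', hle, k, y, -, rfl⟩ := hstep
  have hy : y ∈ Finset.Icc 1 n \ facet b k := by
    have hmem := hb'.2 k
    have hnot := apply_notMem_facet (k := k) hb'.1.injective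
    rw [Function.update_self] at hmem hnot
    rw [facet_update] at hnot
    exact Finset.mem_sdiff.2 ⟨hmem, hnot⟩
  have hk := coords_le_coords_iff.1 hle k
  rw [Function.update_self] at hk
  rw [valueSet_update]
  rcases lt_or_ge (k : ℕ) i with hki | hki
  · exact (halign k).1 hki y hy (hk.1 hki)
  · exact (halign k).2 hki y hy (hk.2 hki)

lemma plus_of_sourceStep (hi : i ≤ d) (hp : p + d ≤ n) (hτ : τ ∈ coSigOnly n d p i)
    (hb : IsEnumeration n b) (hplus : τ (valueSet b) = true) (hstep : SourceStep n i b b') :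
    τ (valueSet b') = true := by
  obtain ⟨hco, hcount, hcomp⟩ := hτ
  obtain ⟨hsource, -, hconn⟩ := hcomp _ hplus
  obtain ⟨c, hc, hcb, halign⟩ := isAligned_of_plusConn hi hco (hcount ▸ hp) hsource hconn
  obtain rfl := (valueSet_inj hc.1 hb.1).1 hcb
  exact halign.plus_of_sourceStep hstep

lemma plus_of_coords_le (hi : i ≤ d) (hp : p + d ≤ n) (hτ : τ ∈ coSigOnly n d p i)
    (hb : IsEnumeration n b) (hb' : IsEnumeration n b') (hle : coords n i b' ≤ coords n i b)
    (hplus : τ (valueSet b) = true) : τ (valueSet b') = true := by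
  have hsteps := reflTransGen_sourceStep hb hb' hle
  clear hb' hle
  induction hsteps using Relation.ReflTransGen.head_induction_on with
  | refl => exact hplus
  | head hstep _ ih => exact ih hstep.1 (plus_of_sourceStep hi hp hτ hb hplus hstep)

theorem isFerrers_image_gMap (hi : i ≤ d) (hp : p + d ≤ n) (hτ : τ ∈ coSigOnly n d p i) :
    IsFerrers d i p (gMap n d i '' {B | τ B = true}) := by
  have hco := hτ.1.1
  refine ⟨?_, ?_, ?_⟩
  · rintro _ ⟨B, hB, rfl⟩
    obtain ⟨b, hb, rfl⟩ := exists_isEnumeration (hco B hB).1 (hco B hB).2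
    exact gMap_valueSet hb.1 ▸ hb.coords_mem_ZSet
  · have hinj : Set.InjOn (gMap n d i) {B | τ B = true} := injOn_gMap.mono hco
    rw [hinj.ncard_image]
    exact hτ.2.1
  · rintro _ ⟨B, hB, rfl⟩ a ha hle
    obtain ⟨b, hb, rfl⟩ := exists_isEnumeration (hco B hB).1 (hco B hB).2
    rw [gMap_valueSet hb.1] at hle
    obtain ⟨b', hb', rfl⟩ := hb.exists_coords_eq_of_le hi ha hle
    exact ⟨valueSet b', plus_of_coords_le hi hp hτ hb hb' hle hB, gMap_valueSet hb'.1⟩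

end Alignment

section FerrersBounds

variable {n d i p : ℕ} {F : Set (Fin d → ℤ)} {a a' : Fin d → ℤ}

lemma IsFerrers.finite (hF : IsFerrers d i p F) (hp : 1 ≤ p) : F.Finite :=
  Set.finite_of_ncard_ne_zero (by rw [hF.2.1]; omega)

lemma update_one_mem_ZSet {m : Fin d} {t : ℤ} (hm : (m : ℕ) + 1 = i ∨ (m : ℕ) = i)
    (ht : 1 ≤ t) : Function.update (1 : Fin d → ℤ) m t ∈ ZSet d i := by
  have hval (j : Fin d) : Function.update (1 : Fin d → ℤ) m t j = if j = m then t else 1 := by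
    rw [Function.update_apply, Pi.one_apply]
  simp only [ZSet, Set.mem_ofPred_eq, hval, Fin.ext_iff]
  refine ⟨fun j => ?_, fun j k hjk hk => ?_, fun j k hjk hj => ?_⟩ <;> split_ifs <;> omega

/-- The points of `{1, …, a m}` on the `m`-th coordinate axis through `(1, …, 1)`. -/
noncomputable def axisSegment (a : Fin d → ℤ) (m : Fin d) : Finset (Fin d → ℤ) :=
  (Finset.Icc 1 (a m)).image (Function.update (1 : Fin d → ℤ) m)

lemma card_axisSegment (a : Fin d → ℤ) (m : Fin d) : a m ≤ (axisSegment a m).card := by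
  rw [axisSegment, Finset.card_image_of_injective _ (Function.update_injective _ m), Int.card_Icc]
  omega

lemma IsFerrers.axisSegment_subset {m : Fin d} (hF : IsFerrers d i p F) (ha : a ∈ F)
    (hm : (m : ℕ) + 1 = i ∨ (m : ℕ) = i) : (axisSegment a m : Set (Fin d → ℤ)) ⊆ F := by
  intro c hc
  obtain ⟨t, ht, rfl⟩ := Finset.mem_image.1 (Finset.mem_coe.1 hc)
  obtain ⟨ht1, hta⟩ := Finset.mem_Icc.1 ht
  have hpos := one_le_of_mem_ZSet (hF.1 ha)
  exact hF.2.2 a ha _ (update_one_mem_ZSet hm ht1)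
    (update_le_iff.2 ⟨hta, fun j _ => hpos j⟩)

lemma card_axisSegment_inter_le_one {j k : Fin d} (hjk : j ≠ k) :
    (axisSegment a j ∩ axisSegment a' k).card ≤ 1 := by
  refine Finset.card_le_one_iff_subset_singleton.2 ⟨1, fun c hc => Finset.mem_singleton.2 ?_⟩
  simp only [axisSegment, Finset.mem_inter, Finset.mem_image] at hc
  obtain ⟨⟨t, -, rfl⟩, s, -, hts⟩ := hc
  have ht : t = 1 := by simpa [hjk] using (congrFun hts j).symm
  rw [ht]
  exact Function.update_eq_self j (1 : Fin d → ℤ)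

lemma IsFerrers.apply_le {m : Fin d} (hF : IsFerrers d i p F) (hfin : F.Finite) (ha : a ∈ F)
    (hm : (m : ℕ) + 1 = i ∨ (m : ℕ) = i) : a m ≤ p := by
  have hcard := Set.ncard_le_ncard (hF.axisSegment_subset ha hm) hfin
  rw [Set.ncard_coe_finset, hF.2.1] at hcard
  have := card_axisSegment a m
  omega

lemma IsFerrers.apply_add_apply_le {j k : Fin d} (hF : IsFerrers d i p F) (hfin : F.Finite)
    (ha : a ∈ F) (ha' : a' ∈ F) (hj : (j : ℕ) + 1 = i) (hk : (k : ℕ) = i) :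
    a j + a' k ≤ p + 1 := by
  have hsub : ((axisSegment a j ∪ axisSegment a' k : Finset _) : Set (Fin d → ℤ)) ⊆ F := by
    rw [Finset.coe_union]
    exact Set.union_subset (hF.axisSegment_subset ha (Or.inl hj))
      (hF.axisSegment_subset ha' (Or.inr hk))
  have hcard := Set.ncard_le_ncard hsub hfin
  rw [Set.ncard_coe_finset, hF.2.1] at hcard
  have hunion := Finset.card_union_add_card_inter (axisSegment a j) (axisSegment a' k)
  have hinter : (axisSegment a j ∩ axisSegment a' k).card ≤ 1 :=
    card_axisSegment_inter_le_one (Fin.ne_of_val_ne (by omega))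
  have := card_axisSegment a j
  have := card_axisSegment a' k
  omega

lemma IsFerrers.exists_coords_eq (hi : i ≤ d) (hp : p + d ≤ n) (hF : IsFerrers d i p F)
    (hfin : F.Finite) (ha : a ∈ F) : ∃ b, IsEnumeration n b ∧ coords n i b = a := by
  refine _root_.exists_coords_eq hi (hF.1 ha) (fun m hm => ?_) fun j k hj hk => ?_
  · have := hF.apply_le hfin ha hm
    omega
  · have := hF.apply_add_apply_le hfin ha ha hj hk
    omega

end FerrersBounds

section FacetComparison

variable {n d i : ℕ} {b b' : Fin (d + 1) → ℕ} {k k' : Fin (d + 1)}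

lemma facet_eq_image_succAbove : facet b k = Finset.univ.image (b ∘ k.succAbove) := by
  rw [← Finset.image_image, Fin.image_succAbove_univ, Finset.compl_singleton, facet]

lemma apply_succAbove_eq_of_facet_eq (hb : StrictMono b) (hb' : StrictMono b')
    (h : facet b k = facet b' k') (j : Fin d) : b (k.succAbove j) = b' (k'.succAbove j) := by
  rw [facet_eq_image_succAbove, facet_eq_image_succAbove] at h
  have heq := (valueSet_inj (hb.comp (Fin.strictMono_succAbove k))
    (hb'.comp (Fin.strictMono_succAbove k'))).1 h
  exact congrFun heq j

lemma le_of_facet_eq (hb : StrictMono b) (hb' : StrictMono b') (h : facet b k = facet b' k')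
    (hle : b' k' ≤ b k) : k' ≤ k := by
  by_contra! hlt
  obtain ⟨j, rfl⟩ := Fin.exists_castSucc_eq.2 (Fin.ne_last_of_lt hlt)
  have hj := apply_succAbove_eq_of_facet_eq hb hb' h j
  rw [Fin.succAbove_castSucc_self, Fin.succAbove_of_castSucc_lt _ _ hlt] at hj
  have := hb j.castSucc_lt_succ
  have := hb' hlt
  omega

lemma apply_eq_of_facet_eq {j : Fin (d + 1)} (hb : StrictMono b) (hb' : StrictMono b')
    (h : facet b k = facet b' k') (hk : k' ≤ k) (hj : j < k' ∨ k < j) : b' j = b j := by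
  rcases hj with hj | hj
  · obtain ⟨l, rfl⟩ := Fin.exists_castSucc_eq.2 (Fin.ne_last_of_lt hj)
    have hl := apply_succAbove_eq_of_facet_eq hb hb' h l
    rwa [Fin.succAbove_of_castSucc_lt _ _ hj, Fin.succAbove_of_castSucc_lt _ _ (hj.trans_le hk),
      eq_comm] at hl
  · obtain ⟨l, rfl⟩ := Fin.exists_succ_eq.2 (Fin.ne_zero_of_lt hj)
    have hl := apply_succAbove_eq_of_facet_eq hb hb' h l
    rwa [Fin.succAbove_of_lt_succ _ _ hj, Fin.succAbove_of_lt_succ _ _ (hk.trans_lt hj),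
      eq_comm] at hl

lemma apply_le_of_facet_eq (hb : StrictMono b) (hb' : StrictMono b') (h : facet b k = facet b' k')
    (hle : b' k' ≤ b k) (j : Fin (d + 1)) : b' j ≤ b j := by
  have hk := le_of_facet_eq hb hb' h hle
  rcases lt_trichotomy j k with hjk | rfl | hjk
  · rcases lt_or_ge j k' with hjk' | hjk'
    · exact (apply_eq_of_facet_eq hb hb' h hk (Or.inl hjk')).le
    · obtain ⟨l, rfl⟩ := Fin.exists_castSucc_eq.2 (Fin.ne_last_of_lt hjk)
      have hl := apply_succAbove_eq_of_facet_eq hb hb' h l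
      rw [Fin.succAbove_of_castSucc_lt _ _ hjk, Fin.succAbove_of_le_castSucc _ _ hjk'] at hl
      exact hl ▸ hb'.monotone l.castSucc_lt_succ.le
  · rcases hk.eq_or_lt with rfl | hlt
    · exact hle
    · obtain ⟨l, rfl⟩ := Fin.exists_succ_eq.2 (Fin.ne_zero_of_lt hlt)
      have hl := apply_succAbove_eq_of_facet_eq hb hb' h l
      rw [Fin.succAbove_succ_self, Fin.succAbove_of_lt_succ _ _ hlt] at hl
      exact hl ▸ hb.monotone l.castSucc_lt_succ.le
  · exact (apply_eq_of_facet_eq hb hb' h hk (Or.inr hjk)).le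

lemma coords_le_of_facet_eq (hb : StrictMono b) (hb' : StrictMono b') (h : facet b k = facet b' k')
    (hle : (k : ℕ) < i ∧ b' k' ≤ b k ∨ i ≤ (k : ℕ) ∧ b k ≤ b' k') :
    coords n i b' ≤ coords n i b := by
  refine coords_le_coords_iff.2 fun j => ?_
  rcases hle with ⟨hki, hle⟩ | ⟨hki, hle⟩
  · refine ⟨fun _ => apply_le_of_facet_eq hb hb' h hle j, fun hj => ?_⟩
    have hkj : k < j := Fin.lt_def.2 (hki.trans_le hj)
    exact (apply_eq_of_facet_eq hb hb' h (le_of_facet_eq hb hb' h hle) (Or.inr hkj)).ge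
  · refine ⟨fun hj => ?_, fun _ => apply_le_of_facet_eq hb' hb h.symm hle j⟩
    have hjk : j < k := Fin.lt_def.2 (hj.trans_le hki)
    exact (apply_eq_of_facet_eq hb' hb h.symm (le_of_facet_eq hb' hb h.symm hle) (Or.inl hjk)).ge

end FacetComparison

section FerrersSign

variable {n d i p : ℕ} {τ : Finset ℕ → Bool} {F : Set (Fin d → ℤ)} {B D : Finset ℕ}
  {b b' : Fin d → ℕ}

/-- The sign function whose `+`-subsets are the `d`-subsets of `[n]` mapped into `F` by
`g_{n,d,i}`. -/
noncomputable def ferrersSign (n d i : ℕ) (F : Set (Fin d → ℤ)) : Finset ℕ → Bool :=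
  ofPlusSet {B | (B ⊆ Finset.Icc 1 n ∧ B.card = d) ∧ gMap n d i B ∈ F}

lemma ferrersSign_eq_true_iff :
    ferrersSign n d i F B = true ↔ (B ⊆ Finset.Icc 1 n ∧ B.card = d) ∧ gMap n d i B ∈ F := by
  simp [ferrersSign, ofPlusSet]

lemma ferrersSign_valueSet (hb : IsEnumeration n b) :
    ferrersSign n d i F (valueSet b) = true ↔ coords n i b ∈ F := by
  rw [ferrersSign_eq_true_iff, gMap_valueSet hb.1]
  exact and_iff_right ⟨hb.valueSet_subset, card_valueSet hb.1.injective⟩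

lemma ferrersSign_valueSet_of_le (hF : IsFerrers d i p F) (hb : IsEnumeration n b)
    (hb' : IsEnumeration n b') (hle : coords n i b' ≤ coords n i b)
    (hplus : ferrersSign n d i F (valueSet b) = true) :
    ferrersSign n d i F (valueSet b') = true := by
  rw [ferrersSign_valueSet hb] at hplus
  exact (ferrersSign_valueSet hb').2 (hF.2.2 _ hplus _ hb'.coords_mem_ZSet hle)

lemma image_gMap_ferrersSign (hi : i ≤ d) (hp : p + d ≤ n) (hF : IsFerrers d i p F)
    (hfin : F.Finite) : gMap n d i '' {B | ferrersSign n d i F B = true} = F := by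
  refine Set.Subset.antisymm ?_ fun a ha => ?_
  · rintro _ ⟨B, hB, rfl⟩
    exact (ferrersSign_eq_true_iff.1 hB).2
  · obtain ⟨b, hb, rfl⟩ := hF.exists_coords_eq hi hp hfin ha
    exact ⟨valueSet b, (ferrersSign_valueSet hb).2 ha, gMap_valueSet hb.1⟩

lemma plusCount_ferrersSign (hi : i ≤ d) (hp : p + d ≤ n) (hF : IsFerrers d i p F)
    (hfin : F.Finite) : plusCount (ferrersSign n d i F) = p := by
  have hinj : Set.InjOn (gMap n d i) {B | ferrersSign n d i F B = true} :=
    injOn_gMap.mono fun B hB => (ferrersSign_eq_true_iff.1 hB).1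
  rw [plusCount, ← hinj.ncard_image, image_gMap_ferrersSign hi hp hF hfin, hF.2.1]

/-- If the entry completing a common facet moved from the first to the second block of coordinates,
the two apex coordinates would sum to `n + 3 - d`, more than a diagram with `p` points allows. -/
lemma lt_of_facet_eq_of_lt {F : Set (Fin (d + 1) → ℤ)} {b b' : Fin (d + 1) → ℕ}
    {k k' : Fin (d + 1)} (hp : p + (d + 1) ≤ n) (hF : IsFerrers (d + 1) i p F) (hfin : F.Finite)
    (hb : IsEnumeration n b) (hb' : IsEnumeration n b') (h : facet b k = facet b' k')
    (hbF : coords n i b ∈ F) (hbF' : coords n i b' ∈ F) (hk : (k : ℕ) < i) : (k' : ℕ) < i := by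
  by_contra! hk'
  obtain ⟨j, hji⟩ : ∃ j : Fin d, (j : ℕ) + 1 = i := ⟨⟨i - 1, by omega⟩, by simp; omega⟩
  have hj := apply_succAbove_eq_of_facet_eq hb.1 hb'.1 h j
  rw [Fin.succAbove_of_le_castSucc _ _ (Fin.le_def.2 (by simp; omega)),
    Fin.succAbove_of_castSucc_lt _ _ (Fin.lt_def.2 (by simp; omega))] at hj
  have hbound := hF.apply_add_apply_le hfin hbF' hbF (j := j.castSucc) (k := j.succ) hji hji
  simp only [coords, Fin.val_castSucc, Fin.val_succ, hji, lt_irrefl, if_false,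
    show (j : ℕ) < i by omega, if_true] at hbound
  omega

lemma exists_isEnumeration_ferrersSign_insert {y : ℕ} (hD : D ⊆ Finset.Icc 1 n)
    (hcard : D.card + 1 = d) (hy : y ∈ Finset.Icc 1 n \ D) :
    ∃ (b : Fin d → ℕ) (k : Fin d), IsEnumeration n b ∧ b k = y ∧ facet b k = D ∧
      (ferrersSign n d i F (insert y D) = true ↔ coords n i b ∈ F) := by
  obtain ⟨hyn, hyD⟩ := Finset.mem_sdiff.1 hy
  obtain ⟨b, hb, hbD⟩ := exists_isEnumeration (Finset.insert_subset hyn hD)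
    ((Finset.card_insert_of_notMem hyD).trans hcard)
  obtain ⟨k, rfl⟩ := mem_valueSet.1 (hbD ▸ Finset.mem_insert_self y D)
  refine ⟨b, k, hb, rfl, ?_, by rw [← hbD, ferrersSign_valueSet hb]⟩
  rw [← erase_valueSet hb.1.injective, hbD, Finset.erase_insert hyD]

lemma ferrersSign_monotoneOn_or_antitoneOn {F : Set (Fin (d + 1) → ℤ)} (hp : p + (d + 1) ≤ n)
    (hF : IsFerrers (d + 1) i p F) (hfin : F.Finite) (hD : D ⊆ Finset.Icc 1 n)
    (hcard : D.card = d) :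
    MonotoneOn (fun y => ferrersSign n (d + 1) i F (insert y D)) ↑(Finset.Icc 1 n \ D) ∨
      AntitoneOn (fun y => ferrersSign n (d + 1) i F (insert y D)) ↑(Finset.Icc 1 n \ D) := by
  have hex (y) (hy : y ∈ Finset.Icc 1 n \ D) := exists_isEnumeration_ferrersSign_insert (i := i)
    (F := F) hD (congrArg (· + 1) hcard) hy
  by_cases hleft : ∃ (c : Fin (d + 1) → ℕ) (l : Fin (d + 1)),
      IsEnumeration n c ∧ facet c l = D ∧ coords n i c ∈ F ∧ (l : ℕ) < i
  · obtain ⟨c, l, hc, hcD, hcF, hl⟩ := hleft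
    refine Or.inr fun y hy z hz hyz => Bool.le_iff_imp.2 ?_
    obtain ⟨b', k', hb', rfl, hbD', hsign'⟩ := hex y hy
    obtain ⟨b, k, hb, rfl, hbD, hsign⟩ := hex z hz
    rw [hsign, hsign']
    intro hbF
    have hk := lt_of_facet_eq_of_lt hp hF hfin hc hb (hcD.trans hbD.symm) hcF hbF hl
    exact hF.2.2 _ hbF _ hb'.coords_mem_ZSet
      (coords_le_of_facet_eq hb.1 hb'.1 (hbD.trans hbD'.symm) (Or.inl ⟨hk, hyz⟩))
  · push Not at hleft
    refine Or.inl fun y hy z hz hyz => Bool.le_iff_imp.2 ?_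
    obtain ⟨b, k, hb, rfl, hbD, hsign⟩ := hex y hy
    obtain ⟨b', k', hb', rfl, hbD', hsign'⟩ := hex z hz
    rw [hsign, hsign']
    intro hbF
    exact hF.2.2 _ hbF _ hb'.coords_mem_ZSet (coords_le_of_facet_eq hb.1 hb'.1
      (hbD.trans hbD'.symm) (Or.inr ⟨hleft b k hb hbD hbF, hyz⟩))

theorem isCoSignotope_ferrersSign (hp : p + d ≤ n) (hF : IsFerrers d i p F) (hfin : F.Finite) :
    IsCoSignotope n d (ferrersSign n d i F) := by
  refine isCoSignotope_iff.2
    ⟨fun A hA => (ferrersSign_eq_true_iff.1 hA).1, fun B hB hcard x hx => ?_⟩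
  have hcard' := Finset.card_erase_add_one hx
  rw [hcard] at hcard'
  subst hcard'
  exact ferrersSign_monotoneOn_or_antitoneOn hp hF hfin ((Finset.erase_subset x B).trans hB) rfl

theorem mem_comp_of_plus (hdn : d ≤ n) (hi : i ≤ d)
    (hdown : ∀ b b' : Fin d → ℕ, IsEnumeration n b → IsEnumeration n b' →
      coords n i b' ≤ coords n i b → τ (valueSet b) = true → τ (valueSet b') = true)
    (hb : IsEnumeration n b) (hplus : τ (valueSet b) = true) :
    valueSet b ∈ comp n d τ i := by
  have hsource : IsEnumeration n (sourceTuple n d i : Fin d → ℕ) := isEnumeration_sourceTuple hdn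
  have hle : coords n i (sourceTuple n d i) ≤ coords n i b := by
    rw [coords_sourceTuple hdn]
    exact one_le_of_mem_ZSet hb.coords_mem_ZSet
  have hsteps := reflTransGen_sourceStep hb hsource hle
  rw [comp, ← valueSet_sourceTuple hdn hi]
  refine ⟨hdown _ _ hb hsource hle hplus, hplus, ?_⟩
  clear hle
  induction hsteps using Relation.ReflTransGen.head_induction_on with
  | refl => exact .refl
  | @head b c hstep _ ih =>
    obtain ⟨hc, hle, k, y, hy, rfl⟩ := hstep
    have hplus' := hdown _ _ hb hc hle hplus
    have hback : Function.update (Function.update b k y) k (b k) = b := by simp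
    have hadj := gAdj_valueSet_update (k := k) (y := b k) hc (by simpa using hy.symm)
      (by rwa [hback])
    rw [hback] at hadj
    exact (ih hc hplus').tail ⟨hplus', hplus, hadj⟩

theorem ferrersSign_mem_coSigOnly (hi : i ≤ d) (hp : p + d ≤ n) (hF : IsFerrers d i p F)
    (hfin : F.Finite) : ferrersSign n d i F ∈ coSigOnly n d p i := by
  refine ⟨isCoSignotope_ferrersSign hp hF hfin, plusCount_ferrersSign hi hp hF hfin,
    fun B hB => ?_⟩
  obtain ⟨hsub, hcard⟩ := (ferrersSign_eq_true_iff.1 hB).1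
  obtain ⟨b, hb, rfl⟩ := exists_isEnumeration hsub hcard
  exact mem_comp_of_plus (by omega) hi
    (fun _ _ hb hb' hle => ferrersSign_valueSet_of_le hF hb hb' hle) hb hB

end FerrersSign

lemma injOn_image_gMap {n d p i : ℕ} :
    Set.InjOn (fun τ : Finset ℕ → Bool => gMap n d i '' {B | τ B = true})
      (coSigOnly n d p i) := by
  intro τ hτ σ hσ h
  have hset : {B | τ B = true} = {B | σ B = true} :=
    (injOn_gMap.image_eq_image_iff hτ.1.1 hσ.1.1).1 h
  exact funext fun B => Bool.eq_iff_iff.2 (Set.ext_iff.1 hset B)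

/-- **Lemma.** The map `τ ↦ ℱ_τ = {g_{n,d,i}(B) : B ∈ τ⁻¹(+)}` is a bijection between
`𝒮̄_{p,i}(n,d)` and the set of `(d,i)`-Ferrers diagrams with respect to `p`. -/
theorem statement8 (n d p i : ℕ) (hdn : d < n) (hp1 : 1 ≤ p) (hp : p + d ≤ n)
    (hi : i ≤ d) :
    Set.BijOn (fun τ : Finset ℕ → Bool => gMap n d i '' {B | τ B = true})
      (coSigOnly n d p i) {F : Set (Fin d → ℤ) | IsFerrers d i p F} := by
  refine ⟨fun τ hτ => isFerrers_image_gMap hi hp hτ, injOn_image_gMap, fun F hF => ?_⟩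
  have hfin := hF.finite hp1
  exact ⟨ferrersSign n d i F, ferrersSign_mem_coSigOnly hi hp hF hfin,
    image_gMap_ferrersSign hi hp hF hfin⟩
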